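/- There exists an absolute constant E > 0 with the following property. Let N^{(1)}, N^{(2)}, N^{(3)} be weight sequences with (n^{(i)}_k)^{1/k} → ∞ for i = 1,2,3 and with D^{(1)} := mg(N^{(1)},N^{(2)}) < ∞ and D^{(2)} := mg(N^{(2)},N^{(3)}) < ∞. Let f : [-1,1] → ℂ be a function and assume there exist constants K, c_1, c_2 > 0, ε_0 > 0 and, for each 0 < ε ≤ ε_0, a function f_ε holomorphic on Ω_ε and continuous on the closure of Ω_ε such that sup_{z∈Ω_ε} |f_ε(z)| ≤ K and sup_{x∈[-1,1]} |f(x) − f_ε(x)| ≤ c_1·h_{n^{(1)}}(c_2·ε). Then for every 0 < b < 1, the restriction of f to (-b,b) is C^∞ and satisfies sup_{x∈(-b,b), k∈ℕ} |f^{(k)}(x)|/(σ^k·N^{(3)}_k) < ∞, where σ := 2e·D^{(1)}·D^{(2)}·c_2/(E·(1−b)). -/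

import Mathlib

open Filter Set Asymptotics MeasureTheory

noncomputable section

/-- `M` is a weight sequence: `M 0 = 1`, positive, `M 1 ≥ 1`, log-convex and
`M k ^ (1/k) → ∞`. -/
def IsWeightSeq (M : ℕ → ℝ) : Prop :=
  M 0 = 1 ∧ (∀ k, 0 < M k) ∧ 1 ≤ M 1 ∧
    (∀ k : ℕ, 1 ≤ k → M k ^ 2 ≤ M (k - 1) * M (k + 1)) ∧
    Tendsto (fun k : ℕ => M k ^ (1 / (k : ℝ))) atTop atTop

/-- The sequence `m k = M k / k!`. -/
def mseq (M : ℕ → ℝ) : ℕ → ℝ := fun k => M k / (Nat.factorial k : ℝ)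

/-- Log-convexity of a sequence. -/
def LogConvexSeq (m : ℕ → ℝ) : Prop := ∀ k : ℕ, 1 ≤ k → m k ^ 2 ≤ m (k - 1) * m (k + 1)

/-- `m k ^ (1/k) → ∞`. -/
def RootTendsToInfty (m : ℕ → ℝ) : Prop :=
  Tendsto (fun k : ℕ => m k ^ (1 / (k : ℝ))) atTop atTop

/-- Moderate growth of a sequence. -/
def ModerateGrowth (M : ℕ → ℝ) : Prop :=
  ∃ C : ℝ, 0 < C ∧ ∀ j k : ℕ, M (j + k) ≤ C ^ (j + k) * M j * M k

/-- Derivation closedness of a sequence. -/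
def DerivClosed (M : ℕ → ℝ) : Prop :=
  ∃ C : ℝ, 0 < C ∧ ∀ k : ℕ, M (k + 1) ≤ C ^ (k + 1) * M k

/-- Non-quasianalyticity: `∑_{k≥1} M (k-1) / M k = ∑_{k≥1} 1/μ_k < ∞`. -/
def NonQuasianalytic (M : ℕ → ℝ) : Prop := Summable fun k : ℕ => M k / M (k + 1)

/-- Quasianalyticity: `∑_{k≥1} 1/μ_k = ∞`. -/
def Quasianalytic (M : ℕ → ℝ) : Prop := ¬ NonQuasianalytic M

/-- The associated function `h_m (t) = inf_k m k * t ^ k`. -/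
def hFun (m : ℕ → ℝ) (t : ℝ) : ℝ := ⨅ k : ℕ, m k * t ^ k

/-- `Γ̄_m (t) = min {k | h_m t = m k * t ^ k}`. -/
def GammaBar (m : ℕ → ℝ) (t : ℝ) : ℕ := sInf {k : ℕ | hFun m t = m k * t ^ k}

/-- `Γ̲_m (t) = min {k | m (k+1) / m k ≥ 1 / t}`. -/
def GammaLow (m : ℕ → ℝ) (t : ℝ) : ℕ := sInf {k : ℕ | 1 / t ≤ m (k + 1) / m k}

/-- The set whose supremum is `mg (M, N)`. -/
def mgSet (M N : ℕ → ℝ) : Set ℝ :=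
  {x | ∃ j k : ℕ, 1 ≤ j + k ∧ x = (M (j + k) / (N j * N k)) ^ (1 / (j + k : ℝ))}

/-- `mg (M, N) = sup_{j+k ≥ 1} (M (j+k) / (N j * N k)) ^ (1/(j+k))`. -/
def mg (M N : ℕ → ℝ) : ℝ := sSup (mgSet M N)

/-- `mg (M, N) < ∞`. -/
def MgFinite (M N : ℕ → ℝ) : Prop := BddAbove (mgSet M N)

/-- A weight sequence is regular: `m k ^ (1/k) → ∞`, derivation closed, and
`Γ̄_m (C t) ≤ Γ̲_m t` for some `C ≥ 1`. -/
def RegularWS (M : ℕ → ℝ) : Prop :=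
  RootTendsToInfty (mseq M) ∧ DerivClosed M ∧
    ∃ C : ℝ, 1 ≤ C ∧ ∀ t : ℝ, 0 < t → GammaBar (mseq M) (C * t) ≤ GammaLow (mseq M) t

/-- `f` is of class `E^{M}` (Roumieu) on the open set `U`. -/
def RoumieuOn {E : Type*} [NormedAddCommGroup E] [NormedSpace ℝ E]
    (M : ℕ → ℝ) (f : E → ℂ) (U : Set E) : Prop :=
  ContDiffOn ℝ (⊤ : ℕ∞) f U ∧
    ∀ V : Set E, IsOpen V → IsCompact (closure V) → closure V ⊆ U →
      ∃ C σ : ℝ, 0 < C ∧ 0 < σ ∧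
        ∀ x ∈ V, ∀ k : ℕ, ‖iteratedFDerivWithin ℝ k f U x‖ ≤ C * σ ^ k * M k

/-- `f` is of class `E^{(M)}` (Beurling) on the open set `U`. -/
def BeurlingOn {E : Type*} [NormedAddCommGroup E] [NormedSpace ℝ E]
    (M : ℕ → ℝ) (f : E → ℂ) (U : Set E) : Prop :=
  ContDiffOn ℝ (⊤ : ℕ∞) f U ∧
    ∀ V : Set E, IsOpen V → IsCompact (closure V) → closure V ⊆ U →
      ∀ σ : ℝ, 0 < σ → ∃ C : ℝ, 0 < C ∧
        ∀ x ∈ V, ∀ k : ℕ, ‖iteratedFDerivWithin ℝ k f U x‖ ≤ C * σ ^ k * M k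

/-- A weight matrix: a nonempty, pointwise totally ordered family of weight sequences. -/
def IsWeightMatrix (W : Set (ℕ → ℝ)) : Prop :=
  W.Nonempty ∧ (∀ M ∈ W, IsWeightSeq M) ∧
    ∀ M ∈ W, ∀ N ∈ W, (∀ k, M k ≤ N k) ∨ (∀ k, N k ≤ M k)

/-- R-regularity of a weight matrix. -/
def RRegular (W : Set (ℕ → ℝ)) : Prop :=
  (∀ M ∈ W, RootTendsToInfty (mseq M)) ∧
    (∀ M ∈ W, ∃ N ∈ W, ∃ C : ℝ, 1 ≤ C ∧ ∀ j : ℕ, M (j + 1) ≤ C ^ (j + 1) * N j) ∧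
    (∀ M ∈ W, ∃ N ∈ W, ∃ C : ℝ, 1 ≤ C ∧
      ∀ t : ℝ, 0 < t → GammaBar (mseq N) (C * t) ≤ GammaLow (mseq M) t)

/-- B-regularity of a weight matrix. -/
def BRegular (W : Set (ℕ → ℝ)) : Prop :=
  (∀ M ∈ W, RootTendsToInfty (mseq M)) ∧
    (∀ M ∈ W, ∃ N ∈ W, ∃ C : ℝ, 1 ≤ C ∧ ∀ j : ℕ, N (j + 1) ≤ C ^ j * M j) ∧
    (∀ M ∈ W, ∃ N ∈ W, ∃ C : ℝ, 1 ≤ C ∧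
      ∀ t : ℝ, 0 < t → GammaBar (mseq M) (C * t) ≤ GammaLow (mseq N) t)

/-- R-moderate growth of a weight matrix. -/
def RModerateGrowth (W : Set (ℕ → ℝ)) : Prop := ∀ M ∈ W, ∃ N ∈ W, MgFinite M N

/-- B-moderate growth of a weight matrix. -/
def BModerateGrowth (W : Set (ℕ → ℝ)) : Prop := ∀ M ∈ W, ∃ N ∈ W, MgFinite N M

/-- `f` is of class `E^{W}` (Roumieu, weight matrix) on the open set `U`. -/
def MatrixRoumieuOn {E : Type*} [NormedAddCommGroup E] [NormedSpace ℝ E]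
    (W : Set (ℕ → ℝ)) (f : E → ℂ) (U : Set E) : Prop :=
  ContDiffOn ℝ (⊤ : ℕ∞) f U ∧
    ∀ V : Set E, IsOpen V → IsCompact (closure V) → closure V ⊆ U →
      ∃ M ∈ W, ∃ C σ : ℝ, 0 < C ∧ 0 < σ ∧
        ∀ x ∈ V, ∀ k : ℕ, ‖iteratedFDerivWithin ℝ k f U x‖ ≤ C * σ ^ k * M k

/-- `f` is of class `E^{(W)}` (Beurling, weight matrix) on the open set `U`. -/
def MatrixBeurlingOn {E : Type*} [NormedAddCommGroup E] [NormedSpace ℝ E]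
    (W : Set (ℕ → ℝ)) (f : E → ℂ) (U : Set E) : Prop :=
  ContDiffOn ℝ (⊤ : ℕ∞) f U ∧
    ∀ V : Set E, IsOpen V → IsCompact (closure V) → closure V ⊆ U →
      ∀ M ∈ W, ∀ σ : ℝ, 0 < σ → ∃ C : ℝ, 0 < C ∧
        ∀ x ∈ V, ∀ k : ℕ, ‖iteratedFDerivWithin ℝ k f U x‖ ≤ C * σ ^ k * M k

/-- `ω` is a weight function. -/
def IsWeightFunction (ω : ℝ → ℝ) : Prop :=
  ContinuousOn ω (Ici 0) ∧ MonotoneOn ω (Ici 0) ∧ (∀ t ∈ Ici (0 : ℝ), 0 ≤ ω t) ∧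
    ((fun t => ω (2 * t)) =O[atTop] ω) ∧ (ω =o[atTop] fun t : ℝ => t) ∧
    ((fun t => Real.log t) =o[atTop] ω) ∧ ConvexOn ℝ (Ici 0) fun t => ω (Real.exp t)

/-- The Young conjugate `φ*_ω (s) = sup_{t ≥ 0} (s t - ω (e^t))`. -/
def phiStar (ω : ℝ → ℝ) (s : ℝ) : ℝ := sSup ((fun t => s * t - ω (Real.exp t)) '' Ici 0)

/-- Non-quasianalyticity of a weight function. -/
def NonQuasianalyticW (ω : ℝ → ℝ) : Prop := IntegrableOn (fun t => ω t / t ^ 2) (Ici 1)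

/-- `f` is of class `E^{ω}` (Roumieu) on the open set `U`. -/
def OmegaRoumieuOn {E : Type*} [NormedAddCommGroup E] [NormedSpace ℝ E]
    (ω : ℝ → ℝ) (f : E → ℂ) (U : Set E) : Prop :=
  ContDiffOn ℝ (⊤ : ℕ∞) f U ∧
    ∀ V : Set E, IsOpen V → IsCompact (closure V) → closure V ⊆ U →
      ∃ C ρ : ℝ, 0 < C ∧ 0 < ρ ∧
        ∀ x ∈ V, ∀ k : ℕ,
          ‖iteratedFDerivWithin ℝ k f U x‖ ≤ C * Real.exp (phiStar ω (ρ * k) / ρ)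

/-- `f` is of class `E^{(ω)}` (Beurling) on the open set `U`. -/
def OmegaBeurlingOn {E : Type*} [NormedAddCommGroup E] [NormedSpace ℝ E]
    (ω : ℝ → ℝ) (f : E → ℂ) (U : Set E) : Prop :=
  ContDiffOn ℝ (⊤ : ℕ∞) f U ∧
    ∀ V : Set E, IsOpen V → IsCompact (closure V) → closure V ⊆ U →
      ∀ ρ : ℝ, 0 < ρ → ∃ C : ℝ, 0 < C ∧
        ∀ x ∈ V, ∀ k : ℕ,
          ‖iteratedFDerivWithin ℝ k f U x‖ ≤ C * Real.exp (phiStar ω (ρ * k) / ρ)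

/-- The open ellipse `Ω_ε` with vertices `± cosh ε` and co-vertices `± i sinh ε`. -/
def OmegaE (ε : ℝ) : Set ℂ :=
  {z : ℂ | (z.re / Real.cosh ε) ^ 2 + (z.im / Real.sinh ε) ^ 2 < 1}

/-- The sequence space `Λ^{M}`. -/
def Lambda (M : ℕ → ℝ) : Set (ℕ → ℂ) :=
  {c | ∃ ρ : ℝ, 0 < ρ ∧ ∃ C : ℝ, ∀ k, ‖c k‖ ≤ C * ρ ^ k * M k}

/-- `L(M)`: all non-quasianalytic weight sequences `N ≥ M` with `n = N/k!` log-convex. -/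
def LM (M : ℕ → ℝ) : Set (ℕ → ℝ) :=
  {N | IsWeightSeq N ∧ NonQuasianalytic N ∧ (∀ k, M k ≤ N k) ∧ LogConvexSeq (mseq N)}

/-- A quasianalytic weight sequence `M` is intersectable if `Λ^{M} = ⋂_{N ∈ L(M)} Λ^{N}`. -/
def Intersectable (M : ℕ → ℝ) : Prop := Lambda M = ⋂ N ∈ LM M, Lambda N


lemma aux_cosh_eq (s : ℂ) : Complex.cosh s =
    ((Real.cosh s.re * Real.cos s.im : ℝ) : ℂ) +
      ((Real.sinh s.re * Real.sin s.im : ℝ) : ℂ) * Complex.I := by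
  conv_lhs => rw [← Complex.re_add_im s, Complex.cosh_add, Complex.cosh_mul_I, Complex.sinh_mul_I]
  push_cast
  ring

lemma aux_cosh_re (s : ℂ) : (Complex.cosh s).re = Real.cosh s.re * Real.cos s.im := by
  rw [aux_cosh_eq, Complex.add_re, Complex.re_ofReal_mul, Complex.ofReal_re, Complex.I_re]; ring

lemma aux_cosh_im (s : ℂ) : (Complex.cosh s).im = Real.sinh s.re * Real.sin s.im := by
  rw [aux_cosh_eq, Complex.add_im, Complex.im_ofReal_mul, Complex.ofReal_im, Complex.I_im]; ring

lemma aux_cosh_mem {ε : ℝ} (hε : 0 < ε) {s : ℂ} (hs : |s.re| < ε) :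
    Complex.cosh s ∈ OmegaE ε := by
  have h1 : (Real.cosh s.re / Real.cosh ε) ^ 2 < 1 := by
    rw [div_pow, div_lt_one (by positivity)]
    have : Real.cosh s.re < Real.cosh ε := by
      rw [Real.cosh_lt_cosh, abs_of_pos hε]; exact hs
    have h0 := Real.cosh_pos s.re
    gcongr
  have hS : 0 < Real.sinh ε := Real.sinh_pos_iff.2 hε
  have h2 : (Real.sinh s.re / Real.sinh ε) ^ 2 < 1 := by
    rw [div_pow, div_lt_one (by positivity), ← sq_abs (Real.sinh s.re), Real.abs_sinh]
    have : Real.sinh |s.re| < Real.sinh ε := Real.sinh_lt_sinh.2 hs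
    have h0 : 0 ≤ Real.sinh |s.re| := Real.sinh_nonneg_iff.2 (abs_nonneg _)
    gcongr
  show (_ : ℝ) < (_ : ℝ)
  rw [aux_cosh_re, aux_cosh_im]
  have e := Real.sin_sq_add_cos_sq s.im
  set p := (Real.cosh s.re / Real.cosh ε) ^ 2
  set q := (Real.sinh s.re / Real.sinh ε) ^ 2
  calc _ = p * Real.cos s.im ^ 2 + q * Real.sin s.im ^ 2 := by simp only [p, q]; ring
    _ ≤ max p q * Real.cos s.im ^ 2 + max p q * Real.sin s.im ^ 2 := by
      gcongr
      · exact le_max_left _ _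
      · exact le_max_right _ _
    _ = max p q := by rw [← mul_add, add_comm, e, mul_one]
    _ < 1 := max_lt h1 h2

lemma aux_mem_cosh {δ : ℝ} (hδ : 0 < δ) {s : ℂ} (hs : Complex.cosh s ∈ OmegaE δ) :
    |s.re| < δ := by
  by_contra! h
  have h1 : 1 ≤ (Real.cosh s.re / Real.cosh δ) ^ 2 := by
    rw [div_pow, one_le_div (by positivity)]
    have : Real.cosh δ ≤ Real.cosh s.re := by
      rw [Real.cosh_le_cosh, abs_of_pos hδ]; exact h
    have h0 := Real.cosh_pos δ
    gcongr
  have hS : 0 < Real.sinh δ := Real.sinh_pos_iff.2 hδ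
  have h2 : 1 ≤ (Real.sinh s.re / Real.sinh δ) ^ 2 := by
    rw [div_pow, one_le_div (by positivity), ← sq_abs (Real.sinh s.re), Real.abs_sinh]
    have : Real.sinh δ ≤ Real.sinh |s.re| := Real.sinh_le_sinh.2 h
    gcongr
  have hs' : (_ : ℝ) < _ := hs
  rw [aux_cosh_re, aux_cosh_im] at hs'
  have e := Real.sin_sq_add_cos_sq s.im
  have : (1:ℝ) < 1 := by
    calc 1 = 1 * Real.cos s.im ^ 2 + 1 * Real.sin s.im ^ 2 := by linarith
      _ ≤ (Real.cosh s.re / Real.cosh δ) ^ 2 * Real.cos s.im ^ 2 +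
          (Real.sinh s.re / Real.sinh δ) ^ 2 * Real.sin s.im ^ 2 := by gcongr
      _ = _ := by ring
      _ < 1 := hs'
  exact lt_irrefl _ this

lemma aux_exists_cosh {δ : ℝ} (hδ : 0 < δ) {z : ℂ} (hz : z ∈ OmegaE δ) :
    ∃ s : ℂ, Complex.cosh s = z ∧ 0 ≤ s.re ∧ s.re < δ := by
  obtain ⟨w, rfl⟩ := Complex.cos_surjective z
  rw [← Complex.cosh_mul_I] at hz ⊢
  have := aux_mem_cosh hδ hz
  rcases le_total 0 (w * Complex.I).re with h | h
  · exact ⟨_, rfl, h, (le_abs_self _).trans_lt this⟩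
  · refine ⟨-(w * Complex.I), Complex.cosh_neg _, ?_, ?_⟩
    · rw [Complex.neg_re]; linarith
    · rw [Complex.neg_re]; exact (neg_le_abs _).trans_lt this

lemma aux_omega_open (ε : ℝ) : IsOpen (OmegaE ε) := by
  apply isOpen_lt <;> fun_prop

lemma aux_omega_mono {δ ε : ℝ} (hδ : 0 < δ) (h : δ ≤ ε) : OmegaE δ ⊆ OmegaE ε := by
  intro z hz
  obtain ⟨s, rfl, h0, h1⟩ := aux_exists_cosh hδ hz
  exact aux_cosh_mem (hδ.trans_le h) (by rw [abs_of_nonneg h0]; linarith)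

lemma aux_disc {b δ x : ℝ} (hb : b < 1) (hδ : 0 < δ) (hδ1 : δ ≤ 1) (hx : x ∈ Ioo (-b) b) {z : ℂ}
    (hz : z ∈ Metric.closedBall (x : ℂ) (δ * (1 - b) / 2)) : z ∈ OmegaE δ := by
  rw [Metric.mem_closedBall, dist_eq_norm] at hz
  set r := δ * (1 - b) / 2 with hr
  have h1 : |z.re - x| ≤ r := by
    simpa using (Complex.abs_re_le_norm (z - x)).trans hz
  have h2 : |z.im| ≤ r := by
    simpa using (Complex.abs_im_le_norm (z - x)).trans hz
  have hb0 : 0 < b := by have := hx.1; have := hx.2; linarith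
  have hrb : r ≤ (1 - b) / 2 := by rw [hr]; nlinarith
  have h3 : |z.re| ≤ (1 + b) / 2 := by
    have := abs_le.1 h1
    rw [abs_le]; have := hx.1; have := hx.2
    constructor <;> linarith
  have hS : δ ≤ Real.sinh δ := Real.self_le_sinh_iff.2 hδ.le
  have hC : 1 ≤ Real.cosh δ := Real.one_le_cosh δ
  show (_ : ℝ) < (_ : ℝ)
  have e1 : (z.re / Real.cosh δ) ^ 2 ≤ ((1 + b) / 2) ^ 2 := by
    rw [← sq_abs, abs_div, abs_of_pos (Real.cosh_pos δ)]
    have : |z.re| / Real.cosh δ ≤ (1 + b) / 2 := (div_le_self (abs_nonneg _) hC).trans h3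
    gcongr
  have e2 : (z.im / Real.sinh δ) ^ 2 ≤ ((1 - b) / 2) ^ 2 := by
    rw [← sq_abs, abs_div, abs_of_pos (hδ.trans_le hS)]
    have : |z.im| / Real.sinh δ ≤ (1 - b) / 2 := by
      rw [div_le_iff₀ (hδ.trans_le hS)]
      calc _ ≤ r := h2
        _ = (1 - b) / 2 * δ := by rw [hr]; ring
        _ ≤ _ := by gcongr
    gcongr
  nlinarith

lemma aux_three {ε M B : ℝ} (hε : 0 < ε) (hM : 0 < M) (hB : 0 < B) {g : ℂ → ℂ}
    (hg : DifferentiableOn ℂ g (OmegaE ε)) (hgB : ∀ z ∈ OmegaE ε, ‖g z‖ ≤ B)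
    (hgM : ∀ x ∈ Icc (-1 : ℝ) 1, ‖g x‖ ≤ M) :
    ∀ z ∈ OmegaE (ε / 4), ‖g z‖ ≤ Real.sqrt (M * B) := by
  intro z hz
  rcases le_total B M with h | h
  · refine (hgB z (aux_omega_mono (by positivity) (by linarith) hz)).trans ?_
    apply Real.le_sqrt_of_sq_le
    nlinarith
  obtain ⟨s, rfl, h0, h1⟩ := aux_exists_cosh (by positivity) hz
  have hcs : ∀ w ∈ Complex.HadamardThreeLines.verticalClosedStrip 0 (ε / 2),
      Complex.cosh w ∈ OmegaE ε := by
    intro w hw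
    have hw' : w.re ∈ Icc 0 (ε / 2) := hw
    exact aux_cosh_mem hε (by rw [abs_of_nonneg hw'.1]; linarith [hw'.2])
  have hcont : ContinuousOn (fun w => g (Complex.cosh w))
      (Complex.HadamardThreeLines.verticalClosedStrip 0 (ε / 2)) :=
    hg.continuousOn.comp Complex.continuous_cosh.continuousOn hcs
  have hsub : Complex.HadamardThreeLines.verticalStrip 0 (ε / 2) ⊆
      Complex.HadamardThreeLines.verticalClosedStrip 0 (ε / 2) :=
    preimage_mono Ioo_subset_Icc_self
  have hclosed : IsClosed (Complex.HadamardThreeLines.verticalClosedStrip 0 (ε / 2)) :=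
    isClosed_Icc.preimage Complex.continuous_re
  have key := Complex.HadamardThreeLines.norm_le_interp_of_mem_verticalClosedStrip'
    (f := fun w => g (Complex.cosh w)) (z := s) (a := M) (b := B) (l := 0) (u := ε / 2)
    (by positivity) (show s.re ∈ Icc 0 (ε / 2) from ⟨h0, by linarith⟩)
    ⟨hg.comp Complex.differentiable_cosh.differentiableOn (fun w hw => hcs w (hsub hw)),
      hcont.mono (closure_minimal hsub hclosed)⟩
    ⟨B, by rintro _ ⟨w, hw, rfl⟩; exact hgB _ (hcs w hw)⟩
    (by
      intro w hw
      have hw0 : w.re = 0 := hw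
      have : Complex.cosh w = ((Real.cos w.im : ℝ) : ℂ) := by
        apply Complex.ext
        · rw [aux_cosh_re, hw0, Complex.ofReal_re]; simp
        · rw [aux_cosh_im, hw0]; simp
      simp only [this]
      exact hgM _ (Real.cos_mem_Icc _))
    (by
      intro w hw
      have hw0 : w.re = ε / 2 := hw
      exact hgB _ (hcs w (show w.re ∈ Icc 0 (ε / 2) by rw [hw0]; constructor <;> linarith)))
  refine key.trans ?_
  simp only [sub_zero]
  set t := s.re / (ε / 2)
  have ht0 : 0 ≤ t := by positivity
  have ht : t ≤ 1 / 2 := by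
    simp only [t]; rw [div_le_iff₀ (by positivity)]; linarith
  rw [Real.sqrt_eq_rpow, Real.mul_rpow hM.le hB.le]
  have e1 : M ^ (1 - t) = M ^ (1 / 2 : ℝ) * M ^ (1 / 2 - t) := by
    rw [← Real.rpow_add hM]; congr 1; ring
  have e2 : B ^ (1 / 2 : ℝ) = B ^ (1 / 2 - t) * B ^ t := by
    rw [← Real.rpow_add hB]; congr 1; ring
  rw [e1, e2, mul_assoc]
  have : M ^ (1 / 2 - t) ≤ B ^ (1 / 2 - t) := Real.rpow_le_rpow hM.le h (by linarith)
  gcongr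

lemma aux_cauchy {b δ x C : ℝ} (hb : b < 1) (hδ : 0 < δ) (hδ1 : δ ≤ 1) (hx : x ∈ Ioo (-b) b)
    {g : ℂ → ℂ} (hg : DifferentiableOn ℂ g (OmegaE δ)) (hC : ∀ z ∈ OmegaE δ, ‖g z‖ ≤ C) (k : ℕ) :
    ‖iteratedDeriv k g x‖ ≤ k.factorial * C / (δ * (1 - b) / 2) ^ k := by
  have hr : 0 < δ * (1 - b) / 2 := by have : 0 < 1 - b := by linarith
                                      positivity
  apply Complex.norm_iteratedDeriv_le_of_forall_mem_sphere_norm_le k hr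
  · apply DifferentiableOn.diffContOnCl
    rw [closure_ball _ hr.ne']
    exact hg.mono (fun z hz => aux_disc hb hδ hδ1 hx hz)
  · exact fun z hz => hC z (aux_disc hb hδ hδ1 hx (Metric.sphere_subset_closedBall hz))

lemma aux_hasDeriv {b δ x : ℝ} (hb : b < 1) (hδ : 0 < δ) (hδ1 : δ ≤ 1) (hx : x ∈ Ioo (-b) b)
    {g : ℂ → ℂ} (hg : DifferentiableOn ℂ g (OmegaE δ)) (k : ℕ) :
    HasDerivAt (fun y : ℝ => iteratedDeriv k g y) (iteratedDeriv (k + 1) g x) x := by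
  have hm : (x : ℂ) ∈ OmegaE δ := aux_disc hb hδ hδ1 hx
    (Metric.mem_closedBall_self (by have : 0 < 1 - b := by linarith
                                    positivity))
  have ha : AnalyticAt ℂ g x := hg.analyticAt ((aux_omega_open δ).mem_nhds hm)
  have h2 := (ha.iterated_deriv k).differentiableAt
  rw [← iteratedDeriv_eq_iterate] at h2
  rw [iteratedDeriv_succ]
  exact h2.hasDerivAt.comp_ofReal

lemma aux_smooth {s : Set ℝ} (hs : IsOpen s) {f : ℝ → ℂ} {H : ℕ → ℝ → ℂ}
    (h0 : ∀ x ∈ s, f x = H 0 x) (hH : ∀ k, ∀ x ∈ s, HasDerivAt (H k) (H (k + 1) x) x) :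
    ContDiffOn ℝ (⊤ : ℕ∞) f s ∧ ∀ k, ∀ x ∈ s, iteratedDerivWithin k f s x = H k x := by
  have key : ∀ k, ∀ x ∈ s, iteratedDerivWithin k f s x = H k x := by
    intro k
    induction k with
    | zero => intro x hx; simpa using h0 x hx
    | succ k ih =>
      intro x hx
      rw [iteratedDerivWithin_succ, derivWithin_congr (fun y hy => ih y hy) (ih x hx)]
      exact (hH k x hx).hasDerivWithinAt.derivWithin (hs.uniqueDiffWithinAt hx)
  refine ⟨contDiffOn_of_differentiableOn_deriv fun m _ => ?_, key⟩
  exact DifferentiableOn.congr (fun x hx => (hH m x hx).differentiableAt.differentiableWithinAt)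
    (key m)

lemma aux_mg {M N : ℕ → ℝ} (hM : IsWeightSeq M) (hN : IsWeightSeq N) (h : MgFinite M N) :
    0 < mg M N ∧ ∀ j k, mseq M (j + k) ≤ mg M N ^ (j + k) * (mseq N j * mseq N k) := by
  have hMp := hM.2.1
  have hNp := hN.2.1
  have hle : ∀ j k : ℕ, 1 ≤ j + k →
      (M (j + k) / (N j * N k)) ^ (1 / (j + k : ℝ)) ≤ mg M N := fun j k hjk =>
    le_csSup h ⟨j, k, hjk, rfl⟩
  have hpos : ∀ j k : ℕ, 0 < M (j + k) / (N j * N k) := fun j k =>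
    div_pos (hMp _) (mul_pos (hNp _) (hNp _))
  have hD : 0 < mg M N := lt_of_lt_of_le (Real.rpow_pos_of_pos (hpos 1 0) _) (hle 1 0 (by norm_num))
  refine ⟨hD, fun j k => ?_⟩
  have h1 : M (j + k) ≤ mg M N ^ (j + k) * (N j * N k) := by
    rcases Nat.eq_zero_or_pos (j + k) with h0 | h0
    · obtain ⟨rfl, rfl⟩ : j = 0 ∧ k = 0 := by omega
      simp [hM.1, hN.1]
    · rw [← div_le_iff₀ (mul_pos (hNp _) (hNp _))]
      have h3 := hle j k h0
      have h4 := pow_le_pow_left₀ (Real.rpow_nonneg (hpos j k).le _) h3 (j + k)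
      rw [← Real.rpow_natCast, ← Real.rpow_mul (hpos j k).le] at h4
      have : (1 / (j + k : ℝ)) * ((j + k : ℕ) : ℝ) = 1 := by
        have : (0 : ℝ) < ((j + k : ℕ) : ℝ) := by exact_mod_cast h0
        push_cast at this ⊢
        field_simp
      rwa [this, Real.rpow_one] at h4
  unfold mseq
  have hf : ((j.factorial * k.factorial : ℕ) : ℝ) ≤ ((j + k).factorial : ℝ) := by
    exact_mod_cast Nat.le_of_dvd (Nat.factorial_pos _) (Nat.factorial_mul_factorial_dvd_factorial_add j k)
  push_cast at hf
  have p1 : (0 : ℝ) < j.factorial := by positivity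
  have p2 : (0 : ℝ) < k.factorial := by positivity
  rw [div_mul_div_comm, ← mul_div_assoc]
  have := hNp j
  have := hNp k
  gcongr

lemma aux_hFun {M : ℕ → ℝ} (hM : IsWeightSeq M) {t : ℝ} (ht : 0 < t) (k : ℕ) :
    hFun (mseq M) t ≤ mseq M k * t ^ k := by
  refine ciInf_le ⟨0, ?_⟩ k
  rintro _ ⟨j, rfl⟩
  have := hM.2.1 j
  simp only [mseq]
  positivity

lemma aux_root {m : ℕ → ℝ} (hm : ∀ k, 0 < m k) (h : RootTendsToInfty m) {R : ℝ} (hR : 0 < R) :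
    ∃ A : ℝ, 0 ≤ A ∧ ∀ k, R ^ k ≤ A * m k := by
  have h1 : ∀ᶠ k in atTop, R ^ k / m k ≤ 1 := by
    filter_upwards [h.eventually_ge_atTop R, eventually_ge_atTop 1] with k hk hk1
    rw [div_le_one (hm k)]
    have h4 := pow_le_pow_left₀ hR.le hk k
    rw [← Real.rpow_natCast (m k ^ _), ← Real.rpow_mul (hm k).le] at h4
    have : (1 / (k : ℝ)) * (k : ℝ) = 1 := by
      have : (0 : ℝ) < k := by exact_mod_cast hk1
      field_simp
    rwa [this, Real.rpow_one] at h4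
  obtain ⟨A, hA⟩ := Filter.IsBoundedUnder.bddAbove_range
    (show IsBoundedUnder (· ≤ ·) atTop (fun k => R ^ k / m k) from ⟨1, h1⟩)
  have hA' : ∀ k, R ^ k / m k ≤ A := fun k => hA ⟨k, rfl⟩
  refine ⟨A, le_trans ?_ (hA' 0), fun k => (div_le_iff₀ (hm k)).1 (hA' k)⟩
  have := hm 0
  positivity

/-- from a family of uniformly bounded holomorphic approximations on the
ellipses `Ω_ε` with rate `h_{n⁽¹⁾}`, the approximated function is ultradifferentiable of
class `B^{N⁽³⁾}_σ` on `(-b, b)` for every `b < 1`. -/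
theorem statement14 : ∃ E : ℝ, 0 < E ∧
    ∀ N₁ N₂ N₃ : ℕ → ℝ, IsWeightSeq N₁ → IsWeightSeq N₂ → IsWeightSeq N₃ →
      RootTendsToInfty (mseq N₁) → RootTendsToInfty (mseq N₂) →
      RootTendsToInfty (mseq N₃) →
      MgFinite N₁ N₂ → MgFinite N₂ N₃ →
      ∀ f : ℝ → ℂ, ∀ K c₁ c₂ ε₀ : ℝ, 0 < K → 0 < c₁ → 0 < c₂ → 0 < ε₀ →
      (∀ ε : ℝ, 0 < ε → ε ≤ ε₀ → ∃ fε : ℂ → ℂ,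
        DifferentiableOn ℂ fε (OmegaE ε) ∧ ContinuousOn fε (closure (OmegaE ε)) ∧
        (∀ z ∈ OmegaE ε, ‖fε z‖ ≤ K) ∧
        ∀ x ∈ Icc (-1 : ℝ) 1, ‖f x - fε (x : ℂ)‖ ≤ c₁ * hFun (mseq N₁) (c₂ * ε)) →
      ∀ b : ℝ, 0 < b → b < 1 →
        ContDiffOn ℝ (⊤ : ℕ∞) f (Ioo (-b) b) ∧
        ∃ A : ℝ, ∀ x ∈ Ioo (-b) b, ∀ k : ℕ,
          ‖iteratedFDerivWithin ℝ k f (Ioo (-b) b) x‖ ≤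
            A * (2 * Real.exp 1 * mg N₁ N₂ * mg N₂ N₃ * c₂ / (E * (1 - b))) ^ k *
              N₃ k := by
  refine ⟨Real.exp 1 / 8, by positivity, ?_⟩
  intro N₁ N₂ N₃ w1 w2 w3 _ _ r3 m12 m23 f K c₁ c₂ ε₀ hK hc1 hc2 hε₀ H b hb0 hb
  obtain ⟨hD1, hm1⟩ := aux_mg w1 w2 m12
  obtain ⟨hD2, hm2⟩ := aux_mg w2 w3 m23
  set D₁ := mg N₁ N₂
  set D₂ := mg N₂ N₃
  have hb1 : 0 < 1 - b := by linarith
  have hpos : ∀ {N : ℕ → ℝ}, IsWeightSeq N → ∀ k, 0 < mseq N k := fun hN k =>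
    div_pos (hN.2.1 k) (by positivity)
  have hσeq : 2 * Real.exp 1 * D₁ * D₂ * c₂ / (Real.exp 1 / 8 * (1 - b))
      = 16 * (D₁ * D₂ * c₂) / (1 - b) := by
    have := Real.exp_pos 1
    field_simp
    ring
  rw [hσeq]
  set D := D₁ * D₂ * c₂ with hD
  have hDpos : 0 < D := by positivity
  set σ := 16 * D / (1 - b) with hσ
  have hσpos : 0 < σ := by positivity
  choose F hd _ hB hA using H
  set e0 := min ε₀ 1 with he0
  have he0pos : 0 < e0 := lt_min hε₀ one_pos
  set e : ℕ → ℝ := fun j => e0 * (1 / 2) ^ j with he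
  have hepos : ∀ j, 0 < e j := fun j => by simp only [he]; positivity
  have hele : ∀ j, e j ≤ e0 := fun j =>
    mul_le_of_le_one_right he0pos.le (pow_le_one₀ (by norm_num) (by norm_num))
  have heε : ∀ j, e j ≤ ε₀ := fun j => (hele j).trans (min_le_left _ _)
  have he1 : ∀ j, e j ≤ 1 := fun j => (hele j).trans (min_le_right _ _)
  have hesucc : ∀ j, e (j + 1) = e j / 2 := fun j => by simp only [he, pow_succ]; ring
  have hesum : Summable e := (summable_geometric_of_lt_one (by norm_num) (by norm_num)).mul_left e0
  set G : ℕ → ℂ → ℂ := fun j => F (e j) (hepos j) (heε j) with hG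
  have hGd : ∀ j, DifferentiableOn ℂ (G j) (OmegaE (e j)) := fun j => hd _ _ _
  have hGB : ∀ j, ∀ z ∈ OmegaE (e j), ‖G j z‖ ≤ K := fun j => hB _ _ _
  have hGA : ∀ j, ∀ x ∈ Icc (-1 : ℝ) 1, ‖f x - G j (x : ℂ)‖ ≤ c₁ * hFun (mseq N₁) (c₂ * e j) :=
    fun j => hA _ _ _
  set P : ℕ → ℕ → ℝ := fun k j => (D * e j) ^ (k + 1) * (mseq N₃ k * mseq N₃ 1) with hP
  have hPpos : ∀ k j, 0 < P k j := fun k j => by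
    have := hpos w3 k; have := hpos w3 1; have := hepos j
    simp only [hP]; positivity
  have hhP : ∀ k j, hFun (mseq N₁) (c₂ * e j) ≤ P k j ^ 2 := by
    intro k j
    have hej := hepos j
    refine (aux_hFun w1 (by positivity) ((k + 1) + (k + 1))).trans ?_
    have a1 := hm1 (k + 1) (k + 1)
    have a2 := hm2 k 1
    have a3 := hpos w2 (k + 1)
    calc mseq N₁ ((k + 1) + (k + 1)) * (c₂ * e j) ^ ((k + 1) + (k + 1))
        ≤ (D₁ ^ ((k + 1) + (k + 1)) * (mseq N₂ (k + 1) * mseq N₂ (k + 1))) *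
          (c₂ * e j) ^ ((k + 1) + (k + 1)) := by gcongr
      _ ≤ (D₁ ^ ((k + 1) + (k + 1)) * ((D₂ ^ (k + 1) * (mseq N₃ k * mseq N₃ 1)) *
          (D₂ ^ (k + 1) * (mseq N₃ k * mseq N₃ 1)))) *
          (c₂ * e j) ^ ((k + 1) + (k + 1)) := by
          have := hpos w3 k; have := hpos w3 1
          gcongr
      _ = P k j ^ 2 := by simp only [hP, hD, mul_pow, pow_add]; ring
  have hPanti : ∀ k j, P k (j + 1) ≤ P k j := by
    intro k j
    have := hpos w3 k; have := hpos w3 1; have := hepos j; have := hepos (j + 1)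
    have : e (j + 1) ≤ e j := by rw [hesucc]; linarith
    simp only [hP]
    gcongr
  set g : ℕ → ℂ → ℂ := fun j z => G (j + 1) z - G j z with hg
  have hsub : ∀ j, OmegaE (e (j + 1)) ⊆ OmegaE (e j) := fun j =>
    aux_omega_mono (hepos _) (by rw [hesucc]; linarith [hepos j])
  have hgd : ∀ j, DifferentiableOn ℂ (g j) (OmegaE (e (j + 1))) := fun j =>
    (hGd (j + 1)).sub ((hGd j).mono (hsub j))
  have hgB : ∀ j, ∀ z ∈ OmegaE (e (j + 1)), ‖g j z‖ ≤ 2 * K := fun j z hz =>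
    (norm_sub_le _ _).trans (by linarith [hGB (j + 1) z hz, hGB j z (hsub j hz)])
  have hgM : ∀ k j, ∀ x ∈ Icc (-1 : ℝ) 1, ‖g j x‖ ≤ 2 * c₁ * P k j ^ 2 := by
    intro k j x hx
    have a1 := hGA j x hx
    have a2 := hGA (j + 1) x hx
    have a3 : c₁ * hFun (mseq N₁) (c₂ * e j) ≤ c₁ * P k j ^ 2 := by
      gcongr; exact hhP k j
    have a4 : c₁ * hFun (mseq N₁) (c₂ * e (j + 1)) ≤ c₁ * P k j ^ 2 := by
      have := hhP k (j + 1)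
      have h5 := hPanti k j
      have h6 := hPpos k (j + 1)
      have : P k (j + 1) ^ 2 ≤ P k j ^ 2 := by gcongr
      gcongr
      linarith
    have : g j x = (f x - G j x) - (f x - G (j + 1) x) := by simp only [hg]; ring
    rw [this]
    refine (norm_sub_le _ _).trans ?_
    linarith
  set Q := Real.sqrt (2 * c₁ * (2 * K)) with hQ
  have hQ0 : 0 ≤ Q := Real.sqrt_nonneg _
  have hgP : ∀ k j, ∀ z ∈ OmegaE (e (j + 1) / 4), ‖g j z‖ ≤ P k j * Q := by
    intro k j z hz
    have hp := hPpos k j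
    have := aux_three (hepos (j + 1)) (M := 2 * c₁ * P k j ^ 2) (B := 2 * K) (by positivity)
      (by positivity) (hgd j) (hgB j) (hgM k j) z hz
    have h2 : 2 * c₁ * P k j ^ 2 * (2 * K) = P k j ^ 2 * (2 * c₁ * (2 * K)) := by ring
    rwa [h2, Real.sqrt_mul (by positivity), Real.sqrt_sq hp.le] at this
  have hδ : ∀ j, 0 < e (j + 1) / 4 := fun j => by have := hepos (j + 1); positivity
  have hδ1 : ∀ j, e (j + 1) / 4 ≤ 1 := fun j => by linarith [he1 (j + 1), hepos (j + 1)]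
  have hδs : ∀ j, OmegaE (e (j + 1) / 4) ⊆ OmegaE (e (j + 1)) := fun j =>
    aux_omega_mono (hδ j) (by linarith [hepos (j + 1)])
  set A₁ := Q * mseq N₃ 1 * D with hA1
  have hgu : ∀ k j, ∀ x ∈ Ioo (-b) b,
      ‖iteratedDeriv k (g j) x‖ ≤ A₁ * σ ^ k * N₃ k * e j := by
    intro k j x hx
    refine (aux_cauchy hb (hδ j) (hδ1 j) hx ((hgd j).mono (hδs j)) (hgP k j) k).trans (le_of_eq ?_)
    have hej := hepos j
    rw [hesucc]
    have h1 : e j / 2 / 4 * (1 - b) / 2 = e j * (1 - b) / 16 := by ring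
    have h2 : N₃ k = k.factorial * mseq N₃ k := by
      simp only [mseq]; field_simp
    rw [h1, h2]
    simp only [hP, hσ, hA1, pow_succ, mul_pow, div_pow]
    field_simp
  have husum : ∀ k, Summable fun j => A₁ * σ ^ k * N₃ k * e j := fun k => hesum.mul_left _
  have hgs : ∀ k, ∀ x ∈ Ioo (-b) b, Summable fun j => iteratedDeriv k (g j) (x : ℂ) :=
    fun k x hx => Summable.of_norm_bounded (husum k) (fun j => hgu k j x hx)
  set Hf : ℕ → ℝ → ℂ := fun k x => iteratedDeriv k (G 0) x + ∑' j, iteratedDeriv k (g j) x with hHf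
  have hH0 : ∀ x ∈ Ioo (-b) b, f x = Hf 0 x := by
    intro x hx
    have hx1 : x ∈ Icc (-1 : ℝ) 1 := ⟨by linarith [hx.1], by linarith [hx.2]⟩
    have t1 := (hgs 0 x hx).hasSum.tendsto_sum_nat
    simp only [iteratedDeriv_zero] at t1
    have t2 : ∀ n, ∑ j ∈ Finset.range n, g j (x : ℂ) = G n x - G 0 x := fun n =>
      Finset.sum_range_sub (fun j => G j (x : ℂ)) n
    simp only [t2] at t1
    have t3 : Tendsto (fun n => G n (x : ℂ)) atTop (nhds (f x)) := by
      rw [tendsto_iff_norm_sub_tendsto_zero]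
      refine squeeze_zero (g := fun j => c₁ * (mseq N₁ 1 * c₂) * e j) (fun _ => norm_nonneg _)
        (fun j => ?_) ?_
      · rw [norm_sub_rev]
        refine (hGA j x hx1).trans ?_
        have := aux_hFun w1 (mul_pos hc2 (hepos j)) 1
        calc _ ≤ c₁ * (mseq N₁ 1 * (c₂ * e j) ^ 1) := by gcongr
          _ = _ := by ring
      · simpa using hesum.tendsto_atTop_zero.const_mul (c₁ * (mseq N₁ 1 * c₂))
    have t4 := tendsto_nhds_unique t1 (t3.sub_const (G 0 x))
    simp only [hHf, iteratedDeriv_zero]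
    rw [t4]; ring
  have hHd : ∀ k, ∀ x ∈ Ioo (-b) b, HasDerivAt (Hf k) (Hf (k + 1) x) x := by
    intro k x hx
    refine (aux_hasDeriv hb (hepos 0) (he1 0) hx (hGd 0) k).add ?_
    exact hasDerivAt_tsum_of_isPreconnected (husum (k + 1)) isOpen_Ioo isPreconnected_Ioo
      (fun j y hy => aux_hasDeriv hb (hepos (j + 1)) (he1 (j + 1)) hy (hgd j) k)
      (fun j y hy => hgu (k + 1) j y hy) hx (hgs k x hx) hx
  obtain ⟨hsm, hit⟩ := aux_smooth isOpen_Ioo hH0 hHd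
  refine ⟨hsm, ?_⟩
  set r := e 0 * (1 - b) / 2 with hr
  have hrpos : 0 < r := by have := hepos 0; positivity
  obtain ⟨A₂, hA20, hA2⟩ := aux_root (hpos w3) r3 (R := 1 / (r * σ)) (by positivity)
  refine ⟨K * A₂ + A₁ * ∑' j, e j, fun x hx k => ?_⟩
  rw [norm_iteratedFDerivWithin_eq_norm_iteratedDerivWithin, hit k x hx]
  refine (norm_add_le _ _).trans ?_
  have b1 := aux_cauchy hb (hepos 0) (he1 0) hx (hGd 0) (hGB 0) k
  have b2 : (k.factorial : ℝ) * K / r ^ k ≤ K * A₂ * σ ^ k * N₃ k := by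
    have h2 : N₃ k = k.factorial * mseq N₃ k := by
      simp only [mseq]; field_simp
    calc (k.factorial : ℝ) * K / r ^ k = k.factorial * K * σ ^ k * (1 / (r * σ)) ^ k := by
          have q1 : r ^ k ≠ 0 := (pow_pos hrpos k).ne'
          have q2 : σ ^ k ≠ 0 := (pow_pos hσpos k).ne'
          rw [one_div_pow, mul_pow r σ k]
          generalize r ^ k = R at q1
          generalize σ ^ k = S at q2
          field_simp
      _ ≤ k.factorial * K * σ ^ k * (A₂ * mseq N₃ k) := by gcongr; exact hA2 k
      _ = _ := by rw [h2]; ring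
  have b3 := tsum_of_norm_bounded (husum k).hasSum (fun j => hgu k j x hx)
  rw [tsum_mul_left] at b3
  calc _ ≤ K * A₂ * σ ^ k * N₃ k + A₁ * σ ^ k * N₃ k * ∑' j, e j := add_le_add (b1.trans b2) b3
    _ = _ := by ring
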